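/- Let q > 2 and let u : ℝ/ℤ → ℝⁿ be an embedded, regular C¹ curve with TP(u) < ∞. Then the unit tangent u'/|u'| lies in W^{1-1/q,q} and there is a constant C > 0 depending only on ‖u'‖_{L^∞}, min_{ℝ/ℤ}|u'|, and q such that [u'/|u'|]_{W^{1-1/q,q}}^q ≤ C ( TP(u) + TP(u)^{(q-1)/(q-2)} ). -/

import Mathlib

open MeasureTheory Set Filter
open scoped RealInnerProductSpace ENNReal Topology

noncomputable section

/-- The distance on the circle `ℝ/ℤ` between the points represented by `x` and `y`. -/
def circDist (x y : ℝ) : ℝ := ‖((x - y : ℝ) : AddCircle (1 : ℝ))‖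

/-- The representative of `z` modulo `1` lying in `(-1/2, 1/2]`. -/
def wrap (z : ℝ) : ℝ := 1 / 2 - Int.fract (1 / 2 - z)

/-- Squared wedge norm `|a ∧ b|² = |a|²|b|² - ⟨a,b⟩²`. -/
def wedgeSq {n : ℕ} (a b : EuclideanSpace ℝ (Fin n)) : ℝ :=
  ‖a‖ ^ 2 * ‖b‖ ^ 2 - ⟪a, b⟫ ^ 2

/-- Wedge inner product `⟨a∧b, c∧d⟩ = ⟨a,c⟩⟨b,d⟩ - ⟨a,d⟩⟨b,c⟩`. -/
def wedgeInner {n : ℕ} (a b c d : EuclideanSpace ℝ (Fin n)) : ℝ :=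
  ⟪a, c⟫ * ⟪b, d⟫ - ⟪a, d⟫ * ⟪b, c⟫

/-- Fundamental domain for double integrals over `(ℝ/ℤ)²`. -/
def unitSq : Set (ℝ × ℝ) := Ioc (0 : ℝ) 1 ×ˢ Ioc (0 : ℝ) 1

/-- The tangent-point functional `TP` (extended-real-valued). -/
def TPe {n : ℕ} (q : ℝ) (u : ℝ → EuclideanSpace ℝ (Fin n)) : ℝ≥0∞ :=
  ENNReal.ofReal (1 / q) *
    ∫⁻ p in unitSq, ENNReal.ofReal
      (wedgeSq (deriv u p.2) (u p.1 - u p.2) ^ (q / 2) / ‖u p.1 - u p.2‖ ^ (2 * q))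

/-- The tangent-point functional `TP` (real-valued). -/
def TPr {n : ℕ} (q : ℝ) (u : ℝ → EuclideanSpace ℝ (Fin n)) : ℝ := (TPe q u).toReal

/-- The `q`-th power of the Sobolev–Slobodeckii seminorm `[f]_{W^{s,q}}` on `ℝ/ℤ`. -/
def sobSemPow {n : ℕ} (s q : ℝ) (f : ℝ → EuclideanSpace ℝ (Fin n)) : ℝ≥0∞ :=
  ∫⁻ p in unitSq, ENNReal.ofReal (‖f p.1 - f p.2‖ ^ q / circDist p.1 p.2 ^ (1 + s * q))

/-- The `W^{s,q}`-norm `‖f‖_{L^q} + [f]_{W^{s,q}}`. -/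
def Wnorm {n : ℕ} (s q : ℝ) (f : ℝ → EuclideanSpace ℝ (Fin n)) : ℝ :=
  (∫ x in Ioc (0 : ℝ) 1, ‖f x‖ ^ q) ^ (1 / q) + (sobSemPow s q f).toReal ^ (1 / q)

/-- The bi-Lipschitz constant `bil(u) = sup_{x ≢ y} |x-y|_{ℝ/ℤ}/|u(x)-u(y)|`. -/
def bil {n : ℕ} (u : ℝ → EuclideanSpace ℝ (Fin n)) : ℝ≥0∞ :=
  ⨆ (x : ℝ) (y : ℝ) (_ : circDist x y ≠ 0),
    ENNReal.ofReal (circDist x y) / ENNReal.ofReal ‖u x - u y‖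

/-- The `L^∞`-norm of the derivative of `u`. -/
def linfD {n : ℕ} (u : ℝ → EuclideanSpace ℝ (Fin n)) : ℝ≥0∞ :=
  ⨆ x : ℝ, (‖deriv u x‖₊ : ℝ≥0∞)

/-- A periodic curve is embedded if it is injective on the circle `ℝ/ℤ`. -/
def Embedded {n : ℕ} (u : ℝ → EuclideanSpace ℝ (Fin n)) : Prop :=
  ∀ x y : ℝ, u x = u y → ((x : AddCircle (1 : ℝ)) = (y : AddCircle (1 : ℝ)))

/-- A curve is regular if `min_{ℝ/ℤ} |u'| > 0`. -/
def Regular {n : ℕ} (u : ℝ → EuclideanSpace ℝ (Fin n)) : Prop :=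
  0 < ⨅ x : ℝ, ‖deriv u x‖

/-- Orthogonal projection of `b` onto the orthogonal complement of `ℝ a`. -/
def projPerp {n : ℕ} (a b : EuclideanSpace ℝ (Fin n)) : EuclideanSpace ℝ (Fin n) :=
  b - (⟪b, a⟫ / ‖a‖ ^ 2) • a

/-- The classical tangent-point functional (extended-real-valued). -/
def TPcle {n : ℕ} (q : ℝ) (u : ℝ → EuclideanSpace ℝ (Fin n)) : ℝ≥0∞ :=
  ENNReal.ofReal (1 / q) *
    ∫⁻ p in unitSq, ENNReal.ofReal
      (‖projPerp (deriv u p.2) (u p.1 - u p.2)‖ ^ q / ‖u p.1 - u p.2‖ ^ (2 * q) *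
        (‖deriv u p.1‖ * ‖deriv u p.2‖))

/-- The integrand of the functional `M(u; v, w)`. -/
def Mintegrand {n : ℕ} (q : ℝ) (u v w : ℝ → EuclideanSpace ℝ (Fin n)) (p : ℝ × ℝ) : ℝ :=
  wedgeSq (deriv u p.2) (u p.1 - u p.2) ^ ((q - 2) / 2) / ‖u p.1 - u p.2‖ ^ (2 * q) *
    wedgeInner (deriv u p.2) (u p.1 - u p.2) (deriv v p.2)
      (w p.1 - w p.2 - wrap (p.1 - p.2) • deriv w p.2)

/-- The functional `M(u; v, w)` appearing in the first variation of `TP`. -/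
def Mfun {n : ℕ} (q : ℝ) (u v w : ℝ → EuclideanSpace ℝ (Fin n)) : ℝ :=
  ∫ p in unitSq, Mintegrand q u v w p

/-- The integrand of the functional `A(u; v, w)`. -/
def Aintegrand {n : ℕ} (q : ℝ) (u v w : ℝ → EuclideanSpace ℝ (Fin n)) (p : ℝ × ℝ) : ℝ :=
  wedgeSq (deriv u p.2) (u p.1 - u p.2) ^ (q / 2) / ‖u p.1 - u p.2‖ ^ (2 * q + 2) *
    ⟪v p.1 - v p.2, w p.1 - w p.2⟫

/-- The functional `A(u; v, w)` appearing in the first variation of `TP`. -/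
def Afun {n : ℕ} (q : ℝ) (u v w : ℝ → EuclideanSpace ℝ (Fin n)) : ℝ :=
  ∫ p in unitSq, Aintegrand q u v w p

/-- The first variation `δTP(u)[w] = M(u;u,w) + M(u;w,u) - 2A(u;u,w)`. -/
def deltaTP {n : ℕ} (q : ℝ) (u w : ℝ → EuclideanSpace ℝ (Fin n)) : ℝ :=
  Mfun q u u w + Mfun q u w u - 2 * Afun q u u w

/-- The `H²` inner product on periodic curves. -/
def H2inner (v w : ℝ → EuclideanSpace ℝ (Fin 3)) : ℝ :=
  ∫ x in Ioc (0 : ℝ) 1,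
    (⟪v x, w x⟫ + ⟪deriv v x, deriv w x⟫ + ⟪deriv (deriv v) x, deriv (deriv w) x⟫)

/-- The total energy `E(u) = (κ/2)∫|u''|² + ρ TP(u)`. -/
def energyE (κ ρ q : ℝ) (u : ℝ → EuclideanSpace ℝ (Fin 3)) : ℝ :=
  κ / 2 * (∫ x in Ioc (0 : ℝ) 1, ‖deriv (deriv u) x‖ ^ 2) + ρ * TPr q u

open scoped ProbabilityTheory TensorProduct

/-!
The tangent line field `τ ⊗ τ` forgets the orientation of the unit tangent `τ`, and so does the
tangent-point integrand: comparing the tangent lines at `x` and `y` with the line of the chord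
`u x - u y` bounds the `q`-th power seminorm `L` of `τ ⊗ τ` by a multiple of `TP(u)`.
Morrey's inequality makes `τ ⊗ τ` Hölder continuous, so up to a distance `δ`, of order
`L ^ (-1 / (s q - 1))`, it oscillates by less than `√2`. Within that distance `τ x` and `τ y` are
never orthogonal, hence by continuity they form an acute angle and `|τ x - τ y|` is at most the
distance of the lines. The remaining pairs cost at most the integral of `r ^ (-1 - s q)` over
`r > δ`, of order `δ ^ (-s q)`, which is `L ^ ((q - 1) / (q - 2))` for `s = 1 - 1 / q`.
-/

/-- The `q`-th power of the Sobolev–Slobodeckij seminorm of order `s` over `A`, for maps into a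
metric space. The distance `d` on the domain is a parameter because intervals use `dist` and the
circle uses `circDist`. -/
def slobodeckijPow {E : Type*} [PseudoMetricSpace E] (d : ℝ → ℝ → ℝ) (s q : ℝ) (f : ℝ → E)
    (A : Set ℝ) : ℝ≥0∞ :=
  ∫⁻ p in A ×ˢ A, ENNReal.ofReal (dist (f p.1) (f p.2) ^ q / d p.1 p.2 ^ (1 + s * q))

/-! ### Morrey's inequality on an interval -/

section Morrey

variable {E : Type*} [PseudoMetricSpace E] {s q : ℝ}

lemma lintegral_edist_rpow_le_add {α : Type*} [TopologicalSpace α] [SecondCountableTopology α]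
    [MeasurableSpace α] [OpensMeasurableSpace α] (hq : 1 ≤ q) {g : α → E} (hg : Continuous g)
    (e : E) (μ ν : Measure α) [IsProbabilityMeasure μ] [IsProbabilityMeasure ν] :
    (∫⁻ x, edist (g x) e ^ q ∂μ) ^ (1 / q) ≤
      (∫⁻ z, edist (g z.1) (g z.2) ^ q ∂μ.prod ν) ^ (1 / q) +
        (∫⁻ y, edist (g y) e ^ q ∂ν) ^ (1 / q) := by
  have hm : Measurable fun x => edist (g x) e := (hg.edist continuous_const).measurable
  have hm₂ : Measurable fun z : α × α => edist (g z.1) (g z.2) :=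
    ((hg.comp continuous_fst).edist (hg.comp continuous_snd)).measurable
  have hfst : ∫⁻ z, edist (g z.1) e ^ q ∂μ.prod ν = ∫⁻ x, edist (g x) e ^ q ∂μ :=
    measurePreserving_fst.lintegral_comp (hm.pow_const q)
  have hsnd : ∫⁻ z, edist (g z.2) e ^ q ∂μ.prod ν = ∫⁻ y, edist (g y) e ^ q ∂ν :=
    measurePreserving_snd.lintegral_comp (hm.pow_const q)
  calc (∫⁻ x, edist (g x) e ^ q ∂μ) ^ (1 / q)
      = (∫⁻ z, edist (g z.1) e ^ q ∂μ.prod ν) ^ (1 / q) := by rw [hfst]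
    _ ≤ (∫⁻ z, (edist (g z.1) (g z.2) + edist (g z.2) e) ^ q ∂μ.prod ν) ^ (1 / q) := by
        gcongr
        exact edist_triangle _ _ _
    _ ≤ _ := by
        rw [← hsnd]
        exact ENNReal.lintegral_Lp_add_le hm₂.aemeasurable (hm.comp measurable_snd).aemeasurable hq

lemma edist_rpow_le_ofReal_mul_quotient (hq : 0 < q) (hs : 0 ≤ s) (g : ℝ → E) {x y r : ℝ}
    (hxy : dist x y ≤ r) :
    edist (g x) (g y) ^ q ≤ ENNReal.ofReal (r ^ (1 + s * q)) *
      ENNReal.ofReal (dist (g x) (g y) ^ q / dist x y ^ (1 + s * q)) := by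
  have hr : 0 ≤ r := dist_nonneg.trans hxy
  rw [edist_dist, ENNReal.ofReal_rpow_of_nonneg dist_nonneg hq.le,
    ← ENNReal.ofReal_mul (by positivity)]
  refine ENNReal.ofReal_le_ofReal ?_
  rcases eq_or_ne x y with rfl | hne
  · simp [Real.zero_rpow hq.ne']
  · have hpos : 0 < dist x y := dist_pos.2 hne
    rw [← mul_div_assoc, le_div_iff₀ (by positivity), mul_comm]
    gcongr

lemma lintegral_cond_prod_edist_rpow_le (hq : 0 < q) (hs : 0 ≤ s) (g : ℝ → E) {A B I : Set ℝ}
    (hA : MeasurableSet A) (hB : MeasurableSet B) (hAI : A ⊆ I) (hBI : B ⊆ I) {r : ℝ}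
    (hr : ∀ x ∈ A, ∀ y ∈ B, dist x y ≤ r) :
    ∫⁻ z, edist (g z.1) (g z.2) ^ q ∂(volume[|A]).prod (volume[|B]) ≤
      (volume A)⁻¹ * (volume B)⁻¹ *
        (ENNReal.ofReal (r ^ (1 + s * q)) * slobodeckijPow dist s q g I) := by
  rw [ProbabilityTheory.cond, ProbabilityTheory.cond, Measure.prod_smul_left,
    Measure.prod_smul_right, lintegral_smul_measure, lintegral_smul_measure, smul_eq_mul,
    smul_eq_mul, ← mul_assoc, Measure.prod_restrict, ← Measure.volume_eq_prod]
  gcongr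
  calc ∫⁻ z in A ×ˢ B, edist (g z.1) (g z.2) ^ q
      ≤ ∫⁻ z in A ×ˢ B, ENNReal.ofReal (r ^ (1 + s * q)) *
          ENNReal.ofReal (dist (g z.1) (g z.2) ^ q / dist z.1 z.2 ^ (1 + s * q)) :=
        setLIntegral_mono' (hA.prod hB) fun z hz =>
          edist_rpow_le_ofReal_mul_quotient hq hs g (hr z.1 hz.1 z.2 hz.2)
    _ = ENNReal.ofReal (r ^ (1 + s * q)) * ∫⁻ z in A ×ˢ B,
          ENNReal.ofReal (dist (g z.1) (g z.2) ^ q / dist z.1 z.2 ^ (1 + s * q)) :=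
        lintegral_const_mul' _ _ ENNReal.ofReal_ne_top
    _ ≤ _ := by
        gcongr
        exact lintegral_mono_set (prod_mono hAI hBI)

/-- The interval `Ioc a b` contracted towards the point `p` by the factor `t`. -/
def contractedIoc (a b p t : ℝ) : Set ℝ := Ioc (p + t * (a - p)) (p + t * (b - p))

namespace contractedIoc

variable {a b p t : ℝ}

lemma volume_eq (a b p t : ℝ) :
    volume (contractedIoc a b p t) = ENNReal.ofReal (t * (b - a)) := by
  rw [contractedIoc, Real.volume_Ioc]
  ring_nf

lemma subset {t' : ℝ} (hp : p ∈ Icc a b) (ht : t ≤ t') :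
    contractedIoc a b p t ⊆ contractedIoc a b p t' :=
  Ioc_subset_Ioc (by nlinarith [hp.1]) (by nlinarith [hp.2])

lemma subset_Ioc (hp : p ∈ Icc a b) (ht : t ≤ 1) : contractedIoc a b p t ⊆ Ioc a b := by
  simpa [contractedIoc] using subset hp ht

lemma dist_le {x y : ℝ} (hx : x ∈ contractedIoc a b p t) (hy : y ∈ contractedIoc a b p t) :
    dist x y ≤ t * (b - a) := by
  rw [Real.dist_eq, abs_le]
  constructor <;> linarith [hx.1, hx.2, hy.1, hy.2]

lemma dist_center_le {x : ℝ} (hp : p ∈ Icc a b) (ht : 0 ≤ t) (hx : x ∈ contractedIoc a b p t) :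
    dist x p ≤ t * (b - a) := by
  rw [Real.dist_eq, abs_le]
  constructor <;> nlinarith [hx.1, hx.2, hp.1, hp.2]

lemma isProbabilityMeasure_cond (hab : a < b) (ht : 0 < t) (p : ℝ) :
    IsProbabilityMeasure (volume[|contractedIoc a b p t]) :=
  ProbabilityTheory.cond_isProbabilityMeasure_of_finite
    (by simpa [volume_eq] using mul_pos ht (sub_pos.2 hab)) (by simp [volume_eq])

end contractedIoc

/-- The `L^q` mean oscillation of `g` about the value `g p` on `contractedIoc a b p t`, with respect
to normalized Lebesgue measure. -/
def meanOsc (q : ℝ) (g : ℝ → E) (a b p t : ℝ) : ℝ≥0∞ :=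
  (∫⁻ x, edist (g x) (g p) ^ q ∂volume[|contractedIoc a b p t]) ^ (1 / q)

variable {g : ℝ → E} {a b p : ℝ}

lemma meanOsc_le_add_meanOsc_half (hq : 1 ≤ q) (hs : 0 ≤ s) (hg : Continuous g) (hab : a < b)
    (hp : p ∈ Icc a b) {t : ℝ} (ht : 0 < t) (ht1 : t ≤ 1) :
    meanOsc q g a b p t ≤
      (2 * slobodeckijPow dist s q g (Ioc a b)) ^ (1 / q) *
        ENNReal.ofReal (t * (b - a)) ^ (s - 1 / q) + meanOsc q g a b p (t / 2) := by
  have hq0 : 0 < q := by linarith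
  have hr : 0 < t * (b - a) := mul_pos ht (sub_pos.2 hab)
  have := contractedIoc.isProbabilityMeasure_cond hab ht p
  have := contractedIoc.isProbabilityMeasure_cond hab (half_pos ht) p
  refine (lintegral_edist_rpow_le_add hq hg (g p) _
    (volume[|contractedIoc a b p (t / 2)])).trans (add_le_add_left ?_ _)
  have hsub := contractedIoc.subset hp (half_le_self ht.le)
  have hmean := lintegral_cond_prod_edist_rpow_le (A := contractedIoc a b p t)
    (B := contractedIoc a b p (t / 2)) hq0 hs g measurableSet_Ioc measurableSet_Ioc
    (contractedIoc.subset_Ioc hp ht1) (hsub.trans (contractedIoc.subset_Ioc hp ht1))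
    fun x hx y hy => contractedIoc.dist_le hx (hsub hy)
  have hvol : (ENNReal.ofReal (t * (b - a)))⁻¹ * (ENNReal.ofReal (t / 2 * (b - a)))⁻¹ *
      ENNReal.ofReal ((t * (b - a)) ^ (1 + s * q)) =
      2 * ENNReal.ofReal (t * (b - a)) ^ ((s - 1 / q) * q) := by
    rw [← ENNReal.ofReal_inv_of_pos hr, ← ENNReal.ofReal_inv_of_pos (by linarith),
      ENNReal.ofReal_rpow_of_pos hr, ← ENNReal.ofReal_ofNat, ← ENNReal.ofReal_mul (by positivity),
      ← ENNReal.ofReal_mul (by positivity), ← ENNReal.ofReal_mul (by positivity),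
      show (s - 1 / q) * q = 1 + s * q - 2 by field_simp; ring, Real.rpow_sub hr, Real.rpow_two]
    congr 1
    field_simp
  calc (∫⁻ z, edist (g z.1) (g z.2) ^ q ∂(volume[|contractedIoc a b p t]).prod
          (volume[|contractedIoc a b p (t / 2)])) ^ (1 / q)
      ≤ (2 * slobodeckijPow dist s q g (Ioc a b) *
          ENNReal.ofReal (t * (b - a)) ^ ((s - 1 / q) * q)) ^ (1 / q) := by
        gcongr
        refine hmean.trans_eq ?_
        rw [contractedIoc.volume_eq, contractedIoc.volume_eq, ← mul_assoc, hvol]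
        ring
    _ = _ := by
        rw [ENNReal.mul_rpow_of_nonneg _ _ (by positivity), ← ENNReal.rpow_mul, mul_assoc,
          mul_one_div_cancel hq0.ne', mul_one]

lemma tendsto_meanOsc_zero (hq : 0 < q) (hg : Continuous g) (hab : a < b) (hp : p ∈ Icc a b) :
    Tendsto (meanOsc q g a b p) (𝓝[>] 0) (𝓝 0) := by
  rw [ENNReal.tendsto_nhds_zero]
  intro ε hε
  obtain ⟨δ, hδ, hclose⟩ := EMetric.continuousAt_iff.1 (hg.continuousAt (x := p)) ε hε
  have hsmall : ∀ᶠ t in 𝓝[>] (0 : ℝ), ENNReal.ofReal (t * (b - a)) < δ := by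
    refine (tendsto_order.1 ?_).2 δ hδ
    have : Continuous fun t : ℝ => ENNReal.ofReal (t * (b - a)) :=
      ENNReal.continuous_ofReal.comp (by fun_prop)
    simpa using (this.tendsto 0).mono_left nhdsWithin_le_nhds
  filter_upwards [hsmall, self_mem_nhdsWithin] with t htδ ht
  have ht : 0 < t := ht
  have := contractedIoc.isProbabilityMeasure_cond hab ht p
  have hbound : ∀ᵐ x ∂volume[|contractedIoc a b p t], edist (g x) (g p) ^ q ≤ ε ^ q :=
    ProbabilityTheory.ae_cond_of_forall_mem measurableSet_Ioc fun x hx =>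
      ENNReal.rpow_le_rpow (hclose (((edist_dist x p).trans_le (ENNReal.ofReal_le_ofReal
        (contractedIoc.dist_center_le hp ht.le hx))).trans_lt htδ)).le hq.le
  calc meanOsc q g a b p t ≤ (∫⁻ _, ε ^ q ∂volume[|contractedIoc a b p t]) ^ (1 / q) :=
        ENNReal.rpow_le_rpow (lintegral_mono_ae hbound) (by positivity)
    _ = ε := by
        rw [lintegral_const, measure_univ, mul_one, ← ENNReal.rpow_mul,
          mul_one_div_cancel hq.ne', ENNReal.rpow_one]

/-- The constant in Morrey's inequality: the sum of a geometric series over the dyadic contractions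
of the interval, taken once for each of the two points. -/
def morreyConst (s q : ℝ) : ℝ≥0∞ := 2 * 2 ^ (1 / q) * (1 - (1 / 2) ^ (s - 1 / q))⁻¹

lemma morreyConst_ne_top (hs : 1 / q < s) : morreyConst s q ≠ ∞ := by
  have hlt : (1 / 2 : ℝ≥0∞) ^ (s - 1 / q) < 1 :=
    ENNReal.rpow_lt_one (by simp) (sub_pos.2 hs)
  have hpow : (2 : ℝ≥0∞) ^ (1 / q) ≠ ∞ := by simp
  exact ENNReal.mul_ne_top (ENNReal.mul_ne_top ENNReal.ofNat_ne_top hpow)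
    (ENNReal.inv_ne_top.2 (tsub_pos_of_lt hlt).ne')

lemma meanOsc_half_pow_le (hq : 1 ≤ q) (hs : 1 / q ≤ s) (hg : Continuous g) (hab : a < b)
    (hp : p ∈ Icc a b) (k : ℕ) :
    meanOsc q g a b p ((1 / 2) ^ k) ≤
      (2 * slobodeckijPow dist s q g (Ioc a b)) ^ (1 / q) *
        ENNReal.ofReal (b - a) ^ (s - 1 / q) * ((1 / 2) ^ (s - 1 / q)) ^ k +
      meanOsc q g a b p ((1 / 2) ^ (k + 1)) := by
  have hk : ENNReal.ofReal ((1 / 2) ^ k * (b - a)) ^ (s - 1 / q) =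
      ENNReal.ofReal (b - a) ^ (s - 1 / q) * ((1 / 2) ^ (s - 1 / q)) ^ k := by
    rw [ENNReal.ofReal_mul (by positivity), ENNReal.mul_rpow_of_nonneg _ _ (sub_nonneg.2 hs),
      mul_comm, ENNReal.ofReal_pow (by norm_num), ← ENNReal.rpow_natCast,
      ← ENNReal.rpow_natCast, ← ENNReal.rpow_mul, ← ENNReal.rpow_mul, mul_comm (k : ℝ)]
    simp [ENNReal.ofReal_inv_of_pos]
  have hhalf : ((1 : ℝ) / 2) ^ (k + 1) = (1 / 2) ^ k / 2 := by ring
  rw [mul_assoc, ← hk, hhalf]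
  have hs0 : 0 ≤ s := (one_div_nonneg.2 (zero_le_one.trans hq)).trans hs
  exact meanOsc_le_add_meanOsc_half hq hs0 hg hab hp (by positivity)
    (pow_le_one₀ (by norm_num) (by norm_num))

lemma meanOsc_one_le (hq : 1 ≤ q) (hs : 1 / q < s) (hg : Continuous g) (hab : a < b)
    (hp : p ∈ Icc a b) :
    meanOsc q g a b p 1 ≤ morreyConst s q / 2 * slobodeckijPow dist s q g (Ioc a b) ^ (1 / q) *
      ENNReal.ofReal (b - a) ^ (s - 1 / q) := by
  have hq0 : 0 < q := by linarith
  set V := (2 * slobodeckijPow dist s q g (Ioc a b)) ^ (1 / q) *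
    ENNReal.ofReal (b - a) ^ (s - 1 / q) with hV
  set θ : ℝ≥0∞ := (1 / 2) ^ (s - 1 / q)
  have hsum (n : ℕ) : meanOsc q g a b p 1 ≤
      V * ∑ k ∈ Finset.range n, θ ^ k + meanOsc q g a b p ((1 / 2) ^ n) := by
    induction n with
    | zero => simp
    | succ n ih =>
      refine ih.trans ((add_le_add_right (meanOsc_half_pow_le hq hs.le hg hab hp n) _).trans_eq ?_)
      rw [Finset.sum_range_succ, mul_add, add_assoc]
  have hlim : Tendsto (fun n : ℕ => meanOsc q g a b p ((1 / 2) ^ n)) atTop (𝓝 0) :=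
    (tendsto_meanOsc_zero hq0 hg hab hp).comp (tendsto_nhdsWithin_iff.2
      ⟨tendsto_pow_atTop_nhds_zero_of_lt_one (by norm_num) (by norm_num),
        .of_forall fun n => by simp⟩)
  have hgeom : meanOsc q g a b p 1 ≤ V * (1 - θ)⁻¹ := by
    rw [← add_zero (V * _)]
    refine ge_of_tendsto' (tendsto_const_nhds.add hlim) fun n => (hsum n).trans ?_
    gcongr
    exact (ENNReal.sum_le_tsum _).trans_eq (ENNReal.tsum_geometric θ)
  refine hgeom.trans_eq ?_
  rw [hV, ENNReal.mul_rpow_of_nonneg _ _ (by positivity), morreyConst, mul_assoc 2,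
    mul_comm 2, ENNReal.mul_div_cancel_right two_ne_zero ENNReal.ofNat_ne_top]
  ring

theorem edist_le_morreyConst_mul (hq : 1 ≤ q) (hs : 1 / q < s) (hg : Continuous g) (hab : a < b)
    {x y : ℝ} (hx : x ∈ Icc a b) (hy : y ∈ Icc a b) :
    edist (g x) (g y) ≤ morreyConst s q * slobodeckijPow dist s q g (Ioc a b) ^ (1 / q) *
      ENNReal.ofReal (b - a) ^ (s - 1 / q) := by
  have hq0 : 0 < q := by linarith
  have := contractedIoc.isProbabilityMeasure_cond hab one_pos x
  have hcenter : contractedIoc a b x 1 = contractedIoc a b y 1 := by simp [contractedIoc]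
  calc edist (g x) (g y)
      = (∫⁻ _, edist (g x) (g y) ^ q ∂volume[|contractedIoc a b x 1]) ^ (1 / q) := by
        rw [lintegral_const, measure_univ, mul_one, ← ENNReal.rpow_mul,
          mul_one_div_cancel hq0.ne', ENNReal.rpow_one]
    _ ≤ (∫⁻ z, (edist (g z) (g x) + edist (g z) (g y)) ^ q
          ∂volume[|contractedIoc a b x 1]) ^ (1 / q) := by
        gcongr
        exact edist_triangle_left _ _ _
    _ ≤ meanOsc q g a b x 1 + meanOsc q g a b y 1 := by
        rw [meanOsc, meanOsc, ← hcenter]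
        exact ENNReal.lintegral_Lp_add_le (hg.edist continuous_const).aemeasurable
          (hg.edist continuous_const).aemeasurable hq
    _ ≤ _ := add_le_add (meanOsc_one_le hq hs hg hab hx) (meanOsc_one_le hq hs hg hab hy)
    _ = _ := by rw [← add_mul, ← add_mul, ENNReal.add_halves]

end Morrey

/-! ### The circle -/

section Circle

lemma circDist_nonneg (x y : ℝ) : 0 ≤ circDist x y := norm_nonneg _

lemma circDist_le_dist (x y : ℝ) : circDist x y ≤ dist x y := by
  rw [circDist, UnitAddCircle.norm_eq, Real.dist_eq]
  simpa using round_le (x - y) 0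

lemma circDist_eq_dist {x y : ℝ} (h : dist x y ≤ 1 / 2) : circDist x y = dist x y := by
  rw [circDist, Real.dist_eq, AddCircle.norm_coe_eq_abs_iff _ one_ne_zero]
  simpa [Real.dist_eq] using h

lemma circDist_le_one (x y : ℝ) : circDist x y ≤ 1 := by
  rw [circDist, UnitAddCircle.norm_eq]
  exact (abs_sub_round _).trans (by norm_num)

lemma circDist_comm (x y : ℝ) : circDist x y = circDist y x := by
  rw [circDist, circDist, ← norm_neg, ← AddCircle.coe_neg, neg_sub]

lemma circDist_add_one_right (x y : ℝ) : circDist x (y + 1) = circDist x y := by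
  simp only [circDist, AddCircle.coe_sub, AddCircle.coe_add, AddCircle.coe_period, add_zero]

lemma circDist_add_one_left (x y : ℝ) : circDist (x + 1) y = circDist x y := by
  rw [circDist_comm, circDist_add_one_right, circDist_comm]

lemma continuous_circDist : Continuous fun p : ℝ × ℝ => circDist p.1 p.2 :=
  continuous_norm.comp ((AddCircle.continuous_mk' 1).comp (by fun_prop))

lemma exists_circDist_eq_dist_add_intCast (x y : ℝ) : ∃ k : ℤ, circDist x y = dist x (y + k) :=
  ⟨round (x - y), by rw [circDist, UnitAddCircle.norm_eq, Real.dist_eq]; congr 1; ring⟩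

lemma exists_dist_eq_circDist_of_periodic {E : Type*} {f : ℝ → E} (hf : Function.Periodic f 1)
    (x y : ℝ) : ∃ z, f z = f y ∧ dist x z = circDist x y := by
  obtain ⟨k, hk⟩ := exists_circDist_eq_dist_add_intCast x y
  exact ⟨y + k, by simpa using hf.int_mul k y, hk.symm⟩

lemma eq_of_circDist_eq_zero {E : Type*} {f : ℝ → E} (hf : Function.Periodic f 1) {x y : ℝ}
    (h : circDist x y = 0) : f x = f y := by
  obtain ⟨z, hz, hxz⟩ := exists_dist_eq_circDist_of_periodic hf x y
  rw [← hz, dist_eq_zero.1 (hxz.trans h)]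

lemma setLIntegral_Ioc_add_one_eq {F : ℝ → ℝ≥0∞} (hF : Function.Periodic F 1) (a b : ℝ) :
    ∫⁻ x in Ioc a (a + 1), F x = ∫⁻ x in Ioc b (b + 1), F x := by
  have : VAddInvariantMeasure (AddSubgroup.zmultiples (1 : ℝ)) ℝ volume :=
    ⟨fun c s _ => measure_preimage_add _ _ _⟩
  exact IsAddFundamentalDomain.setLIntegral_eq (G := AddSubgroup.zmultiples (1 : ℝ))
    (isAddFundamentalDomain_Ioc one_pos a) (isAddFundamentalDomain_Ioc one_pos b) F
    hF.map_vadd_zmultiples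

lemma setLIntegral_Ioc_prod_Ioc_add_one_eq {F : ℝ × ℝ → ℝ≥0∞} (hF : Measurable F)
    (hfst : ∀ y, Function.Periodic (fun x => F (x, y)) 1)
    (hsnd : ∀ x, Function.Periodic (fun y => F (x, y)) 1) (a b : ℝ) :
    ∫⁻ p in Ioc a (a + 1) ×ˢ Ioc a (a + 1), F p =
      ∫⁻ p in Ioc b (b + 1) ×ˢ Ioc b (b + 1), F p := by
  simp_rw [Measure.volume_eq_prod, setLIntegral_prod _ hF.aemeasurable,
    fun x => setLIntegral_Ioc_add_one_eq (hsnd x) a b]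
  exact setLIntegral_Ioc_add_one_eq (fun x => by simp only [hfst _ x]) a b

lemma measurable_dist_rpow_div_circDist_rpow {E : Type*} [PseudoMetricSpace E] {f : ℝ → E}
    (hf : Continuous f) (q σ : ℝ) : Measurable fun p : ℝ × ℝ =>
      ENNReal.ofReal (dist (f p.1) (f p.2) ^ q / circDist p.1 p.2 ^ σ) := by
  have hdist : Measurable fun p : ℝ × ℝ => dist (f p.1) (f p.2) :=
    ((hf.comp continuous_fst).dist (hf.comp continuous_snd)).measurable
  exact ((hdist.pow_const q).div (continuous_circDist.measurable.pow_const σ)).ennreal_ofReal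

lemma slobodeckijPow_dist_le_slobodeckijPow_circDist {E : Type*} [PseudoMetricSpace E] {s q : ℝ}
    (hq : 0 < q) (hs : 0 ≤ s) {f : ℝ → E} (hf : Continuous f) (hper : Function.Periodic f 1)
    {a b : ℝ} (hab : b - a ≤ 1) :
    slobodeckijPow dist s q f (Ioc a b) ≤ slobodeckijPow circDist s q f (Ioc 0 1) := by
  have hsub : Ioc a b ⊆ Ioc a (a + 1) := Ioc_subset_Ioc_right (by linarith)
  calc slobodeckijPow dist s q f (Ioc a b)
      ≤ slobodeckijPow circDist s q f (Ioc a b) := by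
        refine lintegral_mono fun p => ENNReal.ofReal_le_ofReal ?_
        rcases (circDist_nonneg p.1 p.2).eq_or_lt with h | h
        · simp [eq_of_circDist_eq_zero hper h.symm, Real.zero_rpow hq.ne']
        · have := circDist_le_dist p.1 p.2
          gcongr
    _ ≤ slobodeckijPow circDist s q f (Ioc a (a + 1)) :=
        lintegral_mono_set (prod_mono hsub hsub)
    _ = slobodeckijPow circDist s q f (Ioc 0 (0 + 1)) :=
        setLIntegral_Ioc_prod_Ioc_add_one_eq (measurable_dist_rpow_div_circDist_rpow hf _ _)
          (fun y x => by simp only [hper x, circDist_add_one_left])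
          (fun x y => by simp only [hper y, circDist_add_one_right]) a 0
    _ = _ := by rw [zero_add]

lemma setLIntegral_comp_circDist_le {ψ : ℝ → ℝ≥0∞} (hψ : Measurable ψ) (x : ℝ) :
    ∫⁻ y in Ioc (0 : ℝ) 1, ψ (circDist x y) ≤ 2 * ∫⁻ r in Ici 0, ψ r := by
  have hper : Function.Periodic (fun y => ψ (circDist x y)) 1 := fun y => by
    simp only [circDist_add_one_right]
  set φ := (Ici (0 : ℝ)).indicator ψ
  have hφ : Measurable φ := hψ.indicator measurableSet_Ici
  calc ∫⁻ y in Ioc (0 : ℝ) 1, ψ (circDist x y)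
      = ∫⁻ y in Ioc (x - 1 / 2) (x - 1 / 2 + 1), ψ (circDist x y) := by
        simpa using setLIntegral_Ioc_add_one_eq hper 0 (x - 1 / 2)
    _ = ∫⁻ y in Ioc (x - 1 / 2) (x - 1 / 2 + 1), ψ |x - y| := by
        refine setLIntegral_congr_fun measurableSet_Ioc fun y hy => ?_
        have hxy : dist x y ≤ 1 / 2 := by
          rw [Real.dist_eq, abs_le]; constructor <;> linarith [hy.1, hy.2]
        rw [circDist_eq_dist hxy, Real.dist_eq]
    _ ≤ ∫⁻ y, ψ |x - y| := setLIntegral_le_lintegral _ _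
    _ = ∫⁻ y, ψ |y| := lintegral_sub_left_eq_self (fun y => ψ |y|) x
    _ ≤ ∫⁻ y, (φ y + φ (-y)) := by
        refine lintegral_mono fun y => ?_
        rcases abs_cases y with ⟨h, hy⟩ | ⟨h, hy⟩
        · simp [φ, h, hy]
        · simp [φ, h, hy.le]
    _ = _ := by
        rw [lintegral_add_left hφ, lintegral_neg_eq_self, ← two_mul,
          lintegral_indicator measurableSet_Ici]

lemma setLIntegral_unitSq_comp_circDist_le {ψ : ℝ → ℝ≥0∞} (hψ : Measurable ψ) :
    ∫⁻ p in unitSq, ψ (circDist p.1 p.2) ≤ 2 * ∫⁻ r in Ici 0, ψ r := by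
  rw [unitSq, Measure.volume_eq_prod,
    setLIntegral_prod (fun p : ℝ × ℝ => ψ (circDist p.1 p.2))
      (hψ.comp continuous_circDist.measurable).aemeasurable]
  refine (lintegral_mono fun x => setLIntegral_comp_circDist_le hψ x).trans_eq ?_
  simp

end Circle

/-- The singular kernel `r ^ (-σ)` cut off to `r > δ`; the cutoff may be `0` or `∞`. -/
def tailKernel (σ : ℝ) (δ : ℝ≥0∞) : ℝ → ℝ≥0∞ :=
  {r | δ < ENNReal.ofReal r}.indicator fun r => ENNReal.ofReal (r ^ (-σ))

lemma measurable_tailKernel (σ : ℝ) (δ : ℝ≥0∞) : Measurable (tailKernel σ δ) :=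
  Measurable.indicator (by fun_prop) (measurableSet_lt measurable_const ENNReal.measurable_ofReal)

lemma lintegral_tailKernel_le {σ : ℝ} (hσ : 1 < σ) (δ : ℝ≥0∞) :
    ∫⁻ r in Ici 0, tailKernel σ δ r ≤ ENNReal.ofReal (1 / (σ - 1)) * δ ^ (1 - σ) := by
  have hpos : 0 < 1 / (σ - 1) := one_div_pos.2 (sub_pos.2 hσ)
  rcases eq_or_ne δ 0 with rfl | h0
  · rw [ENNReal.zero_rpow_of_neg (by linarith), ENNReal.mul_top (by simpa using hσ)]
    exact le_top
  rcases eq_or_ne δ ∞ with rfl | htop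
  · simp [tailKernel]
  obtain ⟨d, hd, rfl⟩ : ∃ d : ℝ, 0 < d ∧ δ = ENNReal.ofReal d :=
    ⟨δ.toReal, ENNReal.toReal_pos h0 htop, (ENNReal.ofReal_toReal htop).symm⟩
  have hset : {r | ENNReal.ofReal d < ENNReal.ofReal r} = Ioi d := by
    ext r; simpa [ENNReal.ofReal_lt_ofReal_iff'] using fun h => hd.trans h
  rw [tailKernel, hset]
  calc ∫⁻ r in Ici 0, (Ioi d).indicator (fun r => ENNReal.ofReal (r ^ (-σ))) r
      ≤ ∫⁻ r in Ioi d, ENNReal.ofReal (r ^ (-σ)) :=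
        (setLIntegral_le_lintegral _ _).trans_eq (lintegral_indicator measurableSet_Ioi _)
    _ = ENNReal.ofReal (∫ r in Ioi d, r ^ (-σ)) :=
        (ofReal_integral_eq_lintegral_ofReal (integrableOn_Ioi_rpow_of_lt (by linarith) hd)
          (ae_restrict_of_forall_mem measurableSet_Ioi fun r hr =>
            Real.rpow_nonneg (hd.trans hr).le _)).symm
    _ = _ := by
        rw [integral_Ioi_rpow_of_lt (by linarith) hd, ENNReal.ofReal_rpow_of_pos hd,
          ← ENNReal.ofReal_mul hpos.le, show -σ + 1 = -(σ - 1) by ring, neg_div_neg_eq,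
          neg_sub, one_div_mul_eq_div]

/-! ### Unit vector fields and their line fields -/

section LineField

variable {E : Type*} [NormedAddCommGroup E] [InnerProductSpace ℝ E]

lemma norm_tmul_self_sub_tmul_self_sq (a b : E) :
    ‖a ⊗ₜ[ℝ] a - b ⊗ₜ[ℝ] b‖ ^ 2 = ‖a‖ ^ 4 + ‖b‖ ^ 4 - 2 * ⟪a, b⟫ ^ 2 := by
  rw [norm_sub_sq_real, TensorProduct.norm_tmul, TensorProduct.norm_tmul,
    TensorProduct.inner_tmul]
  ring

lemma dist_le_dist_tmul_self {a b : E} (ha : ‖a‖ = 1) (hb : ‖b‖ = 1) (h : 0 ≤ ⟪a, b⟫) :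
    dist a b ≤ dist (a ⊗ₜ[ℝ] a) (b ⊗ₜ[ℝ] b) := by
  have hle : ⟪a, b⟫ ≤ 1 := by simpa [ha, hb] using real_inner_le_norm a b
  rw [dist_eq_norm, dist_eq_norm]
  refine le_of_sq_le_sq ?_ (norm_nonneg _)
  rw [norm_tmul_self_sub_tmul_self_sq, norm_sub_sq_real, ha, hb]
  nlinarith

variable {f : ℝ → E}

/-- Orthogonal unit vectors have tensor squares at distance `√2`, so the inner product with `f a`
cannot vanish on `[a, b]`. -/
lemma inner_nonneg_of_dist_tmul_self_lt (hf : Continuous f) (hf1 : ∀ x, ‖f x‖ = 1) {a b : ℝ}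
    (hab : a ≤ b)
    (h : ∀ t ∈ Icc a b, dist (f a ⊗ₜ[ℝ] f a) (f t ⊗ₜ[ℝ] f t) < √2) : 0 ≤ ⟪f a, f b⟫ := by
  by_contra! hneg
  obtain ⟨t, ht, h0⟩ : 0 ∈ (fun t => ⟪f a, f t⟫) '' Icc a b :=
    intermediate_value_Icc' hab (by fun_prop) ⟨hneg.le, real_inner_self_nonneg⟩
  refine (h t ht).not_ge (Real.sqrt_le_iff.2 ⟨dist_nonneg, ?_⟩)
  rw [dist_eq_norm, norm_tmul_self_sub_tmul_self_sq, hf1, hf1, show ⟪f a, f t⟫ = 0 from h0]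
  norm_num

variable {s q : ℝ}

lemma inner_nonneg_of_slobodeckijPow_tmul_self_le (hq : 1 ≤ q) (hs : 1 / q < s)
    (hf : Continuous f) (hf1 : ∀ x, ‖f x‖ = 1) {a b : ℝ} (hab : a ≤ b)
    (hsmall : morreyConst s q * slobodeckijPow dist s q (fun x => f x ⊗ₜ[ℝ] f x) (Ioc a b) ^
      (1 / q) * ENNReal.ofReal (b - a) ^ (s - 1 / q) ≤ 1) : 0 ≤ ⟪f a, f b⟫ := by
  rcases hab.eq_or_lt with rfl | hab
  · exact real_inner_self_nonneg
  refine inner_nonneg_of_dist_tmul_self_lt hf hf1 hab.le fun t ht => ?_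
  have hle := (edist_le_morreyConst_mul (g := fun x => f x ⊗ₜ[ℝ] f x) hq hs (by fun_prop) hab
    (left_mem_Icc.2 hab.le) ht).trans hsmall
  rw [edist_dist, ENNReal.ofReal_le_one] at hle
  exact hle.trans_lt Real.one_lt_sqrt_two

lemma dist_le_dist_tmul_self_of_circDist_small (hq : 1 ≤ q) (hs : 1 / q < s)
    (hf : Continuous f) (hper : Function.Periodic f 1) (hf1 : ∀ x, ‖f x‖ = 1) {x y : ℝ}
    (hsmall : morreyConst s q *
      slobodeckijPow circDist s q (fun x => f x ⊗ₜ[ℝ] f x) (Ioc 0 1) ^ (1 / q) *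
        ENNReal.ofReal (circDist x y) ^ (s - 1 / q) ≤ 1) :
    dist (f x) (f y) ≤ dist (f x ⊗ₜ[ℝ] f x) (f y ⊗ₜ[ℝ] f y) := by
  have hq0 : 0 < q := by linarith
  have hs0 : 0 ≤ s := (one_div_pos.2 hq0).le.trans hs.le
  obtain ⟨z, hz, hxz⟩ := exists_dist_eq_circDist_of_periodic hper x y
  have hinner {a b : ℝ} (hab : a ≤ b) (hlen : b - a = circDist x y) : 0 ≤ ⟪f a, f b⟫ := by
    refine inner_nonneg_of_slobodeckijPow_tmul_self_le hq hs hf hf1 hab (hsmall.trans' ?_)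
    rw [hlen]
    gcongr
    exact slobodeckijPow_dist_le_slobodeckijPow_circDist hq0 hs0 (by fun_prop)
      (fun x => by simp only [hper x]) (hlen.trans_le (circDist_le_one x y))
  refine dist_le_dist_tmul_self (hf1 x) (hf1 y) ?_
  rw [← hz]
  rcases le_total x z with h | h
  · exact hinner h (by rw [← hxz, Real.dist_eq, abs_sub_comm, abs_of_nonneg (sub_nonneg.2 h)])
  · rw [real_inner_comm]
    exact hinner h (by rw [← hxz, Real.dist_eq, abs_of_nonneg (sub_nonneg.2 h)])

lemma ofReal_quotient_le_add_tailKernel (hq : 0 ≤ q) (hf1 : ∀ x, ‖f x‖ = 1) {σ : ℝ} {δ : ℝ≥0∞}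
    {x y : ℝ} (hnear : ENNReal.ofReal (circDist x y) ≤ δ →
      dist (f x) (f y) ≤ dist (f x ⊗ₜ[ℝ] f x) (f y ⊗ₜ[ℝ] f y)) :
    ENNReal.ofReal (dist (f x) (f y) ^ q / circDist x y ^ σ) ≤
      ENNReal.ofReal (dist (f x ⊗ₜ[ℝ] f x) (f y ⊗ₜ[ℝ] f y) ^ q / circDist x y ^ σ) +
        ENNReal.ofReal (2 ^ q) * tailKernel σ δ (circDist x y) := by
  have hd := circDist_nonneg x y
  rcases le_or_gt (ENNReal.ofReal (circDist x y)) δ with h | h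
  · have := hnear h
    refine le_add_right (ENNReal.ofReal_le_ofReal ?_)
    gcongr
  · refine le_add_left ?_
    rw [tailKernel, indicator_of_mem (by exact h), ← ENNReal.ofReal_mul (by positivity),
      Real.rpow_neg hd, ← div_eq_mul_inv]
    have hle : dist (f x) (f y) ≤ 2 := by
      simpa [hf1, one_add_one_eq_two] using dist_le_norm_add_norm (f x) (f y)
    gcongr

/-- The coefficient of the superlinear term in `slobodeckijPow_le_of_norm_eq_one`: the cost of the
pairs of points too far apart for Morrey's inequality to exclude a reversal of direction. -/
def reversalConst (s q : ℝ) : ℝ≥0∞ :=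
  ENNReal.ofReal (2 ^ q) * (2 * ENNReal.ofReal (1 / (s * q))) *
    morreyConst s q ^ (s * q / (s - 1 / q))

lemma reversalConst_ne_top (hq : 0 < q) (hs : 1 / q < s) : reversalConst s q ≠ ∞ := by
  have hs0 : 0 < s := (one_div_pos.2 hq).trans hs
  have := sub_pos.2 hs
  exact ENNReal.mul_ne_top
    (ENNReal.mul_ne_top ENNReal.ofReal_ne_top
      (ENNReal.mul_ne_top ENNReal.ofNat_ne_top ENNReal.ofReal_ne_top))
    (ENNReal.rpow_ne_top_of_nonneg (by positivity) (morreyConst_ne_top hs))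

theorem slobodeckijPow_le_of_norm_eq_one (hq : 1 ≤ q) (hs : 1 / q < s) (hf : Continuous f)
    (hper : Function.Periodic f 1) (hf1 : ∀ x, ‖f x‖ = 1) :
    slobodeckijPow circDist s q f (Ioc 0 1) ≤
      slobodeckijPow circDist s q (fun x => f x ⊗ₜ[ℝ] f x) (Ioc 0 1) +
        reversalConst s q *
          slobodeckijPow circDist s q (fun x => f x ⊗ₜ[ℝ] f x) (Ioc 0 1) ^
            (s / (s - 1 / q)) := by
  have hq0 : 0 < q := by linarith
  have hs0 : 0 < s := (one_div_pos.2 hq0).trans hs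
  have hθ : 0 < s - 1 / q := sub_pos.2 hs
  set L := slobodeckijPow circDist s q (fun x => f x ⊗ₜ[ℝ] f x) (Ioc 0 1)
  set δ : ℝ≥0∞ := (morreyConst s q * L ^ (1 / q)) ^ (-(s - 1 / q)⁻¹) with hδ
  have hnear {x y : ℝ} (h : ENNReal.ofReal (circDist x y) ≤ δ) :
      dist (f x) (f y) ≤ dist (f x ⊗ₜ[ℝ] f x) (f y ⊗ₜ[ℝ] f y) := by
    refine dist_le_dist_tmul_self_of_circDist_small hq hs hf hper hf1 ?_
    refine (mul_le_mul_right (ENNReal.rpow_le_rpow h hθ.le) _).trans ?_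
    rw [hδ, ← ENNReal.rpow_mul, neg_mul, inv_mul_cancel₀ hθ.ne', ENNReal.rpow_neg_one]
    exact ENNReal.mul_inv_le_one _
  have htail : ∫⁻ p in unitSq, tailKernel (1 + s * q) δ (circDist p.1 p.2) ≤
      2 * (ENNReal.ofReal (1 / (s * q)) * δ ^ (-(s * q))) := by
    refine (setLIntegral_unitSq_comp_circDist_le (measurable_tailKernel _ _)).trans ?_
    gcongr
    simpa using lintegral_tailKernel_le (show 1 < 1 + s * q by linarith [mul_pos hs0 hq0]) δ
  have hδpow : δ ^ (-(s * q)) = morreyConst s q ^ (s * q / (s - 1 / q)) *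
      L ^ (s / (s - 1 / q)) := by
    rw [hδ, ← ENNReal.rpow_mul, neg_mul_neg, ENNReal.mul_rpow_of_nonneg _ _ (by positivity),
      ← ENNReal.rpow_mul]
    congr 2 <;> field_simp
  refine (lintegral_mono fun p => ofReal_quotient_le_add_tailKernel hq0.le hf1 hnear).trans ?_
  rw [lintegral_add_left (measurable_dist_rpow_div_circDist_rpow
      (f := fun x => f x ⊗ₜ[ℝ] f x) (by fun_prop) _ _),
    lintegral_const_mul' _ _ ENNReal.ofReal_ne_top]
  refine add_le_add_right ((mul_le_mul_right htail _).trans_eq ?_) _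
  rw [hδpow, reversalConst]
  ring

end LineField

/-! ### Regular closed curves -/

section RegularCurve

variable {E : Type*} [NormedAddCommGroup E] [NormedSpace ℝ E] {u : ℝ → E}

lemma norm_sub_le_mul_circDist (hu : Differentiable ℝ u) (hper : Function.Periodic u 1)
    {Λ : ℝ} (hΛ : ∀ x, ‖deriv u x‖ ≤ Λ) (x y : ℝ) : ‖u x - u y‖ ≤ Λ * circDist x y := by
  obtain ⟨z, hz, hxz⟩ := exists_dist_eq_circDist_of_periodic hper x y
  rw [← hz, ← hxz, Real.dist_eq]
  exact convex_univ.norm_image_sub_le_of_norm_deriv_le (fun x _ => hu x) (fun x _ => hΛ x)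
    (mem_univ z) (mem_univ x)

lemma ae_ne_of_deriv_ne_zero (hu : Differentiable ℝ u) (hu' : ∀ x, deriv u x ≠ 0) :
    ∀ᵐ p : ℝ × ℝ, u p.1 ≠ u p.2 := by
  have hcodiscrete (c : E) : ∀ᶠ y in codiscreteWithin univ, u y ≠ c :=
    mem_codiscreteWithin.2 fun y _ => by
      rw [disjoint_principal_right, ← compl_eq_univ_sdiff, compl_compl]
      exact (hu y).hasDerivAt.eventually_ne (hu' y)
  have hslice (x : ℝ) : ∀ᵐ y, u y ≠ u x := by
    rw [← Measure.restrict_univ (μ := volume)]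
    exact ae_restrict_le_codiscreteWithin MeasurableSet.univ (hcodiscrete (u x))
  have hopen : IsOpen {p : ℝ × ℝ | u p.1 ≠ u p.2} :=
    isOpen_ne_fun (hu.continuous.comp continuous_fst) (hu.continuous.comp continuous_snd)
  rw [Measure.volume_eq_prod, Measure.ae_prod_iff_ae_ae hopen.measurableSet]
  exact .of_forall fun x => (hslice x).mono fun y hy => hy.symm

/-- The unit tangent of `u`; it is `0` where the derivative vanishes. -/
def unitTangent (u : ℝ → E) (x : ℝ) : E := NormedSpace.normalize (deriv u x)

lemma continuous_unitTangent (hu : ContDiff ℝ 1 u) (hu' : ∀ x, deriv u x ≠ 0) :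
    Continuous (unitTangent u) :=
  (hu.continuous_deriv_one.norm.inv₀ fun x => norm_ne_zero_iff.2 (hu' x)).smul
    hu.continuous_deriv_one

lemma unitTangent_periodic (hper : Function.Periodic u 1) :
    Function.Periodic (unitTangent u) 1 := fun x => by
  rw [unitTangent, unitTangent, ← deriv_comp_add_const, funext hper]

end RegularCurve

/-! ### The tangent-point functional -/

section TangentPoint

variable {n : ℕ} {q : ℝ}

lemma wedgeSq_nonneg (v w : EuclideanSpace ℝ (Fin n)) : 0 ≤ wedgeSq v w := by
  rw [wedgeSq, ← mul_pow, ← sq_abs ⟪v, w⟫, sub_nonneg]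
  gcongr
  exact abs_real_inner_le_norm v w

lemma dist_tmul_self_normalize {v w : EuclideanSpace ℝ (Fin n)} (hv : v ≠ 0) (hw : w ≠ 0) :
    dist (NormedSpace.normalize v ⊗ₜ[ℝ] NormedSpace.normalize v)
        (NormedSpace.normalize w ⊗ₜ[ℝ] NormedSpace.normalize w) =
      √2 * √(wedgeSq v w) / (‖v‖ * ‖w‖) := by
  have := norm_pos_iff.2 hv
  have := norm_pos_iff.2 hw
  have hsq : 0 ≤ 2 * wedgeSq v w := mul_nonneg zero_le_two (wedgeSq_nonneg v w)
  rw [← Real.sqrt_mul zero_le_two, dist_eq_norm, eq_comm,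
    ← sq_eq_sq₀ (by positivity) (norm_nonneg _), norm_tmul_self_sub_tmul_self_sq, div_pow,
    Real.sq_sqrt hsq, NormedSpace.norm_normalize_eq_one_iff.2 hv,
    NormedSpace.norm_normalize_eq_one_iff.2 hw, NormedSpace.normalize, NormedSpace.normalize,
    real_inner_smul_left, real_inner_smul_right, wedgeSq]
  field_simp
  ring

/-- The integrand of the tangent-point functional for a tangent vector `v` and a chord `w`. -/
def tpQuotient (q : ℝ) (v w : EuclideanSpace ℝ (Fin n)) : ℝ :=
  wedgeSq v w ^ (q / 2) / ‖w‖ ^ (2 * q)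

lemma tpQuotient_nonneg (q : ℝ) (v w : EuclideanSpace ℝ (Fin n)) : 0 ≤ tpQuotient q v w :=
  div_nonneg (Real.rpow_nonneg (wedgeSq_nonneg v w) _) (by positivity)

lemma tpQuotient_sub_comm (q : ℝ) (v a b : EuclideanSpace ℝ (Fin n)) :
    tpQuotient q v (a - b) = tpQuotient q v (b - a) := by
  rw [tpQuotient, tpQuotient, wedgeSq, wedgeSq, ← neg_sub b a, inner_neg_right, norm_neg, neg_sq]

lemma tpQuotient_eq_rpow (q : ℝ) (v w : EuclideanSpace ℝ (Fin n)) :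
    tpQuotient q v w = (√(wedgeSq v w) / ‖w‖ ^ 2) ^ q := by
  rw [tpQuotient, Real.div_rpow (Real.sqrt_nonneg _) (by positivity), Real.sqrt_eq_rpow,
    ← Real.rpow_mul (wedgeSq_nonneg v w), Real.rpow_mul (norm_nonneg w), Real.rpow_two]
  congr 2
  ring

lemma dist_tmul_self_normalize_le {lam Λ d : ℝ} (hlam : 0 < lam)
    {v w : EuclideanSpace ℝ (Fin n)} (hv : lam ≤ ‖v‖) (hw : w ≠ 0) (hwd : ‖w‖ ≤ Λ * d) :
    dist (NormedSpace.normalize v ⊗ₜ[ℝ] NormedSpace.normalize v)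
        (NormedSpace.normalize w ⊗ₜ[ℝ] NormedSpace.normalize w) ≤
      √2 * Λ / lam * (√(wedgeSq v w) / ‖w‖ ^ 2) * d := by
  have := norm_pos_iff.2 hw
  have hv' := hlam.trans_le hv
  rw [dist_tmul_self_normalize (norm_pos_iff.1 hv') hw]
  calc √2 * √(wedgeSq v w) / (‖v‖ * ‖w‖)
      = √2 / ‖v‖ * (√(wedgeSq v w) / ‖w‖ ^ 2) * ‖w‖ := by field_simp
    _ ≤ √2 / lam * (√(wedgeSq v w) / ‖w‖ ^ 2) * (Λ * d) := by gcongr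
    _ = _ := by ring

lemma dist_tmul_self_normalize_rpow_div_le (hq : 1 ≤ q) {lam Λ d : ℝ} (hlam : 0 < lam)
    (hd : 0 ≤ d) {v v' w : EuclideanSpace ℝ (Fin n)} (hv : lam ≤ ‖v‖) (hv' : lam ≤ ‖v'‖)
    (hw : w ≠ 0) (hwd : ‖w‖ ≤ Λ * d) :
    dist (NormedSpace.normalize v ⊗ₜ[ℝ] NormedSpace.normalize v)
        (NormedSpace.normalize v' ⊗ₜ[ℝ] NormedSpace.normalize v') ^ q / d ^ q ≤
      (√2 * Λ / lam) ^ q * 2 ^ (q - 1) * (tpQuotient q v w + tpQuotient q v' w) := by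
  have hΛ : 0 < Λ := pos_of_mul_pos_left ((norm_pos_iff.2 hw).trans_le hwd) hd
  set κ := √(wedgeSq v w) / ‖w‖ ^ 2
  set κ' := √(wedgeSq v' w) / ‖w‖ ^ 2
  have hκ : 0 ≤ κ := by positivity
  have hκ' : 0 ≤ κ' := by positivity
  have hpowerMean : (κ + κ') ^ q ≤ 2 ^ (q - 1) * (κ ^ q + κ' ^ q) := by
    exact_mod_cast NNReal.rpow_add_le_mul_rpow_add_rpow ⟨κ, hκ⟩ ⟨κ', hκ'⟩ hq
  have hdist : dist (NormedSpace.normalize v ⊗ₜ[ℝ] NormedSpace.normalize v)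
      (NormedSpace.normalize v' ⊗ₜ[ℝ] NormedSpace.normalize v') ≤
        √2 * Λ / lam * (κ + κ') * d := by
    refine (dist_triangle_right _ _
      (NormedSpace.normalize w ⊗ₜ[ℝ] NormedSpace.normalize w)).trans ?_
    refine (add_le_add (dist_tmul_self_normalize_le hlam hv hw hwd)
      (dist_tmul_self_normalize_le hlam hv' hw hwd)).trans_eq ?_
    ring
  rw [← Real.div_rpow dist_nonneg hd, tpQuotient_eq_rpow, tpQuotient_eq_rpow, mul_assoc]
  calc _ ≤ (√2 * Λ / lam * (κ + κ')) ^ q := by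
        gcongr
        exact div_le_of_le_mul₀ hd (by positivity) hdist
    _ = (√2 * Λ / lam) ^ q * (κ + κ') ^ q := Real.mul_rpow (by positivity) (by positivity)
    _ ≤ _ := by gcongr

variable {u : ℝ → EuclideanSpace ℝ (Fin n)}

lemma setLIntegral_unitSq_tpQuotient_add_swap (hu : ContDiff ℝ 1 u) (hq : 0 < q) :
    ∫⁻ p in unitSq, ENNReal.ofReal (tpQuotient q (deriv u p.1) (u p.1 - u p.2) +
      tpQuotient q (deriv u p.2) (u p.1 - u p.2)) = ENNReal.ofReal (2 * q) * TPe q u := by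
  set T : ℝ × ℝ → ℝ≥0∞ := fun p =>
    ENNReal.ofReal (tpQuotient q (deriv u p.2) (u p.1 - u p.2)) with hT
  have hmeas : Measurable T := by
    have := hu.continuous_deriv_one.measurable
    have := hu.continuous.measurable
    simp only [hT, tpQuotient, wedgeSq]
    fun_prop
  have hswap : ∫⁻ p in unitSq, T p.swap = ∫⁻ p in unitSq, T p := by
    simp only [unitSq, Measure.volume_eq_prod, ← Measure.prod_restrict]
    exact lintegral_prod_swap T
  have hTP : TPe q u = ENNReal.ofReal (1 / q) * ∫⁻ p in unitSq, T p := rfl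
  calc _ = ∫⁻ p in unitSq, (T p.swap + T p) := by
        refine lintegral_congr fun p => ?_
        rw [ENNReal.ofReal_add (tpQuotient_nonneg _ _ _) (tpQuotient_nonneg _ _ _),
          tpQuotient_sub_comm q (deriv u p.1)]
        rfl
    _ = 2 * ∫⁻ p in unitSq, T p := by
        rw [lintegral_add_right _ hmeas, hswap, two_mul]
    _ = _ := by
        rw [hTP, ← mul_assoc, ← ENNReal.ofReal_mul (by positivity)]
        field_simp
        simp

/-- The constant in the bound of the seminorm of the tangent line field by the tangent-point
functional, for curves with speed in `[lam, Λ]`. -/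
def tangentLineConst (q lam Λ : ℝ) : ℝ := (√2 * Λ / lam) ^ q * 2 ^ (q - 1) * (2 * q)

theorem slobodeckijPow_tmul_self_unitTangent_le (hq : 1 ≤ q) {lam Λ : ℝ} (hlam : 0 < lam)
    (hu : ContDiff ℝ 1 u) (hper : Function.Periodic u 1) (hlow : ∀ x, lam ≤ ‖deriv u x‖)
    (hupp : ∀ x, ‖deriv u x‖ ≤ Λ) :
    slobodeckijPow circDist (1 - 1 / q) q (fun x => unitTangent u x ⊗ₜ[ℝ] unitTangent u x)
        (Ioc 0 1) ≤
      ENNReal.ofReal (tangentLineConst q lam Λ) * TPe q u := by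
  have hq0 : 0 < q := by linarith
  have hdiff : Differentiable ℝ u := hu.differentiable one_ne_zero
  have hΛ : 0 ≤ Λ := (norm_nonneg _).trans (hupp 0)
  have hinj : ∀ᵐ p : ℝ × ℝ, u p.1 ≠ u p.2 := ae_ne_of_deriv_ne_zero hdiff fun x =>
    norm_pos_iff.1 (hlam.trans_le (hlow x))
  rw [tangentLineConst, ENNReal.ofReal_mul (by positivity), mul_assoc,
    ← setLIntegral_unitSq_tpQuotient_add_swap hu hq0,
    ← lintegral_const_mul' _ _ ENNReal.ofReal_ne_top, slobodeckijPow,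
    show 1 + (1 - 1 / q) * q = q by field_simp; ring]
  refine lintegral_mono_ae (ae_restrict_of_ae (hinj.mono fun p hp => ?_))
  rw [← ENNReal.ofReal_mul (by positivity)]
  exact ENNReal.ofReal_le_ofReal (dist_tmul_self_normalize_rpow_div_le hq hlam
    (circDist_nonneg _ _) (hlow _) (hlow _) (sub_ne_zero.2 hp)
    (norm_sub_le_mul_circDist hdiff hper hupp _ _))

/-- The constant in the final estimate, for curves with speed in `[lam, Λ]`. -/
def tangentPointConst (q lam Λ : ℝ) : ℝ≥0∞ :=
  ENNReal.ofReal (tangentLineConst q lam Λ) + reversalConst (1 - 1 / q) q *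
    ENNReal.ofReal (tangentLineConst q lam Λ) ^ ((q - 1) / (q - 2))

lemma one_div_lt_one_sub_one_div (hq : 2 < q) : 1 / q < 1 - 1 / q := by
  have : 1 / q < 1 / 2 := one_div_lt_one_div_of_lt two_pos hq
  linarith

lemma tangentPointConst_ne_top (hq : 2 < q) (lam Λ : ℝ) : tangentPointConst q lam Λ ≠ ∞ :=
  ENNReal.add_ne_top.2 ⟨ENNReal.ofReal_ne_top, ENNReal.mul_ne_top
    (reversalConst_ne_top (by linarith) (one_div_lt_one_sub_one_div hq))
    (ENNReal.rpow_ne_top_of_nonneg (div_nonneg (by linarith) (by linarith))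
      ENNReal.ofReal_ne_top)⟩

lemma sobSemPow_eq_slobodeckijPow (s q : ℝ) (f : ℝ → EuclideanSpace ℝ (Fin n)) :
    sobSemPow s q f = slobodeckijPow circDist s q f (Ioc 0 1) := by
  simp only [sobSemPow, unitSq, slobodeckijPow, dist_eq_norm]

theorem slobodeckijPow_unitTangent_le (hq : 2 < q) {lam Λ : ℝ} (hlam : 0 < lam)
    (hu : ContDiff ℝ 1 u) (hper : Function.Periodic u 1) (hlow : ∀ x, lam ≤ ‖deriv u x‖)
    (hupp : ∀ x, ‖deriv u x‖ ≤ Λ) :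
    slobodeckijPow circDist (1 - 1 / q) q (unitTangent u) (Ioc 0 1) ≤
      tangentPointConst q lam Λ * (TPe q u + TPe q u ^ ((q - 1) / (q - 2))) := by
  have hu' (x : ℝ) : deriv u x ≠ 0 := norm_pos_iff.1 (hlam.trans_le (hlow x))
  have he : 0 ≤ (q - 1) / (q - 2) := div_nonneg (by linarith) (by linarith)
  have hexp : (1 - 1 / q) / (1 - 1 / q - 1 / q) = (q - 1) / (q - 2) := by
    rw [sub_sub, ← add_div, one_add_one_eq_two, one_sub_div (by linarith),
      one_sub_div (by linarith), div_div_div_cancel_right₀ (by linarith)]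
  refine (slobodeckijPow_le_of_norm_eq_one (by linarith) (one_div_lt_one_sub_one_div hq)
    (continuous_unitTangent hu hu') (unitTangent_periodic hper)
    fun x => NormedSpace.norm_normalize_eq_one_iff.2 (hu' x)).trans ?_
  have hline := slobodeckijPow_tmul_self_unitTangent_le (one_le_two.trans hq.le) hlam hu hper
    hlow hupp
  set L := slobodeckijPow circDist (1 - 1 / q) q
    (fun x => unitTangent u x ⊗ₜ[ℝ] unitTangent u x) (Ioc 0 1)
  set K := ENNReal.ofReal (tangentLineConst q lam Λ)
  set e := (q - 1) / (q - 2)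
  rw [hexp, tangentPointConst, mul_add]
  calc L + reversalConst (1 - 1 / q) q * L ^ e
      ≤ K * TPe q u + reversalConst (1 - 1 / q) q * (K * TPe q u) ^ e := by gcongr
    _ = K * TPe q u + reversalConst (1 - 1 / q) q * K ^ e * TPe q u ^ e := by
        rw [ENNReal.mul_rpow_of_nonneg _ _ he, mul_assoc]
    _ ≤ _ := by
        gcongr
        · exact le_self_add
        · exact le_add_self

end TangentPoint

theorem unit_tangent_seminorm_bound_general (q lam Λ : ℝ) (hq : 2 < q) (hlam : 0 < lam) :
    ∃ C : ℝ, 0 < C ∧ ∀ (n : ℕ) (u : ℝ → EuclideanSpace ℝ (Fin n)),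
      ContDiff ℝ 1 u → Function.Periodic u 1 →
      (∀ x, lam ≤ ‖deriv u x‖) → (∀ x, ‖deriv u x‖ ≤ Λ) →
      TPe q u < ⊤ →
      sobSemPow (1 - 1 / q) q (fun x => ‖deriv u x‖⁻¹ • deriv u x) ≤
        ENNReal.ofReal (C * ((TPe q u).toReal + (TPe q u).toReal ^ ((q - 1) / (q - 2)))) := by
  have he : 0 ≤ (q - 1) / (q - 2) := div_nonneg (by linarith) (by linarith)
  refine ⟨(tangentPointConst q lam Λ).toReal + 1, by positivity,
    fun n u hu hper hlow hupp hTP => ?_⟩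
  have hpow : ENNReal.ofReal ((TPe q u).toReal + (TPe q u).toReal ^ ((q - 1) / (q - 2))) =
      TPe q u + TPe q u ^ ((q - 1) / (q - 2)) := by
    rw [ENNReal.ofReal_add (by positivity) (by positivity),
      ← ENNReal.ofReal_rpow_of_nonneg ENNReal.toReal_nonneg he, ENNReal.ofReal_toReal hTP.ne]
  rw [ENNReal.ofReal_mul (by positivity), hpow]
  calc _ = slobodeckijPow circDist (1 - 1 / q) q (unitTangent u) (Ioc 0 1) :=
        sobSemPow_eq_slobodeckijPow _ _ _
    _ ≤ tangentPointConst q lam Λ * (TPe q u + TPe q u ^ ((q - 1) / (q - 2))) :=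
        slobodeckijPow_unitTangent_le hq hlam hu hper hlow hupp
    _ ≤ _ := by
        gcongr
        exact (ENNReal.le_ofReal_iff_toReal_le (tangentPointConst_ne_top hq lam Λ)
          (by positivity)).2 (le_add_of_nonneg_right zero_le_one)

/-- Necessary regularity for finite energy: if `TP(u) < ∞` then the
unit tangent lies in `W^{1-1/q,q}` with
`[u'/|u'|]_{W^{1-1/q,q}}^q ≤ C (TP(u) + TP(u)^{(q-1)/(q-2)})`, where `C` depends only
on `‖u'‖_{L^∞}` (bounded by `Λ`), `min |u'|` (bounded below by `lam`) and `q`. -/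
theorem unit_tangent_seminorm_bound (n : ℕ) (q lam Λ : ℝ) (hq : 2 < q)
    (hlam : 0 < lam) :
    ∃ C : ℝ, 0 < C ∧ ∀ u : ℝ → EuclideanSpace ℝ (Fin n),
      ContDiff ℝ 1 u → Function.Periodic u 1 → Embedded u →
      (∀ x, lam ≤ ‖deriv u x‖) → (∀ x, ‖deriv u x‖ ≤ Λ) →
      TPe q u < ⊤ →
      sobSemPow (1 - 1 / q) q (fun x => ‖deriv u x‖⁻¹ • deriv u x) ≤
        ENNReal.ofReal (C * ((TPe q u).toReal + (TPe q u).toReal ^ ((q - 1) / (q - 2)))) := by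
  obtain ⟨C, hC, h⟩ := unit_tangent_seminorm_bound_general q lam Λ hq hlam
  exact ⟨C, hC, fun u hu hper _ => h n u hu hper⟩
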